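/- Let G be a primitive but not 2-homogeneous permutation group on an infinite set X. Then G acts locally rigidly on X. -/

import Mathlib

/-!
Failure of 2-homogeneity gives a `G`-invariant graph `Γ` that is neither empty nor complete. Having
rows that differ in only finitely many columns is an invariant equivalence relation on the vertices
of `Γ`, so by primitivity either any two distinct rows differ in infinitely many columns, or any two
rows differ in finitely many.

In the first case, let finitely many nonprincipal ultrafilters have limit rows that separate the
points of `U`. Enlarge `U` to `W` and add to `W` one finite block of vertices per ultrafilter, whose
adjacencies are those of the limit row; each block consists of twins. Taking the block sizes to be
distinct powers of two times `#W + 1`, the size of a twin class determines which blocks it contains,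
so an automorphism preserving the resulting set moves each block vertex to a twin of itself, and
therefore fixes `U` pointwise. One has to prevent the points of `U` from being twins of block
vertices; this is a matter of choosing `W` when every row is isolated, and otherwise every row is,
up to complementing `Γ`, itself a limit row, which gives the freedom to choose the ultrafilters.

In the second case there is an invariant nonempty locally finite graph, connected by primitivity.
Adding to a finite set a vertex far away from it forces that vertex to be fixed by the setwise
stabiliser, and adding such vertices one at a time, chosen to have different distances to `x` and
`y` for each pair of distinct points of `U`, forces `U` to be fixed pointwise.
-/

open Filter Finset

section Basic

variable {X : Type*}

/-- The automorphism group of a graph, as a permutation group of its vertices; thus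
`G ≤ autGroup Γ` says that `Γ` is `G`-invariant. -/
def autGroup (Γ : SimpleGraph X) : Subgroup (Equiv.Perm X) where
  carrier := {g | ∀ x y, Γ.Adj (g x) (g y) ↔ Γ.Adj x y}
  mul_mem' hg hh x y := (hg _ _).trans (hh x y)
  one_mem' _ _ := Iff.rfl
  inv_mem' {g} hg x y := by simpa using (hg (g⁻¹ x) (g⁻¹ y)).symm

lemma mem_autGroup {Γ : SimpleGraph X} {g : Equiv.Perm X} :
    g ∈ autGroup Γ ↔ ∀ x y, Γ.Adj (g x) (g y) ↔ Γ.Adj x y :=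
  Iff.rfl

lemma autGroup_compl_le (Γ : SimpleGraph X) : autGroup Γ ≤ autGroup Γᶜ := fun g hg x y => by
  simp only [SimpleGraph.compl_adj, ne_eq, g.injective.eq_iff, mem_autGroup.1 hg x y]

/-- Local rigidity of a permutation group: every finite set is contained in a finite set whose
setwise stabiliser fixes the former pointwise. -/
def IsLocallyRigid (G : Subgroup (Equiv.Perm X)) : Prop :=
  ∀ U : Finset X, ∃ V : Finset X, U ⊆ V ∧
    ∀ g ∈ G, (∀ x, g x ∈ V ↔ x ∈ V) → ∀ x ∈ U, g x = x

lemma IsLocallyRigid.mono {G G' : Subgroup (Equiv.Perm X)} (h : IsLocallyRigid G') (hG : G ≤ G') :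
    IsLocallyRigid G := fun U =>
  let ⟨V, hUV, hV⟩ := h U
  ⟨V, hUV, fun g hg => hV g (hG hg)⟩

/-- The only invariant equivalence relations are equality and the full relation. Unlike
`MulAction.IsPreprimitive`, this does not include transitivity. -/
def HasOnlyTrivialCongruences (G : Subgroup (Equiv.Perm X)) : Prop :=
  ∀ r : Setoid X, (∀ g ∈ G, ∀ x y : X, r.r x y → r.r (g x) (g y)) →
    (∀ x y : X, r.r x y → x = y) ∨ (∀ x y : X, r.r x y)

variable {α : Type*}

/-- The set of columns in which the rows of `x` and `y` in the matrix `f` differ. -/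
def rowDiff (f : X → X → α) (x y : X) : Set X := {z | f x z ≠ f y z}

lemma mem_rowDiff {f : X → X → α} {x y z : X} : z ∈ rowDiff f x y ↔ f x z ≠ f y z := Iff.rfl

lemma mem_rowDiff_adj {Γ : SimpleGraph X} {x y z : X} :
    z ∈ rowDiff Γ.Adj x y ↔ ¬(Γ.Adj x z ↔ Γ.Adj y z) := by
  rw [mem_rowDiff, ne_eq, eq_iff_iff]

@[simp] lemma rowDiff_self (f : X → X → α) (x : X) : rowDiff f x x = ∅ := by simp [rowDiff]

lemma rowDiff_comm (f : X → X → α) (x y : X) : rowDiff f x y = rowDiff f y x := by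
  simp only [rowDiff, ne_comm]

lemma rowDiff_subset_union (f : X → X → α) (x y z : X) :
    rowDiff f x z ⊆ rowDiff f x y ∪ rowDiff f y z := fun t ht => by
  by_contra h
  simp only [Set.mem_union, mem_rowDiff, not_or, not_not] at h ht
  exact ht (h.1.trans h.2)

lemma rowDiff_map {f : X → X → α} {g : Equiv.Perm X} (hg : ∀ x y, f (g x) (g y) = f x y)
    (x y : X) : rowDiff f (g x) (g y) = g '' rowDiff f x y := by
  ext t
  obtain ⟨z, rfl⟩ := g.surjective t
  simp only [mem_rowDiff, hg, g.injective.mem_set_image]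

lemma HasOnlyTrivialCongruences.rowDiff_infinite_or_finite {G : Subgroup (Equiv.Perm X)}
    (hG : HasOnlyTrivialCongruences G) {f : X → X → α}
    (hf : ∀ g ∈ G, ∀ x y, f (g x) (g y) = f x y) :
    (∀ x y, x ≠ y → (rowDiff f x y).Infinite) ∨ ∀ x y, (rowDiff f x y).Finite := by
  let r : Setoid X :=
    { r := fun x y => (rowDiff f x y).Finite
      iseqv :=
        { refl := fun x => by simp
          symm := fun h => by rwa [rowDiff_comm]
          trans := fun h h' => (h.union h').subset (rowDiff_subset_union f _ _ _) } }
  refine (hG r fun g hg x y h => ?_).imp_left fun h x y hxy hfin => hxy (h x y hfin)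
  change (rowDiff f (g x) (g y)).Finite
  rw [rowDiff_map (hf g hg)]
  exact h.image g

end Basic

section Dyadic

variable {X ι : Type*} [DecidableEq X] [Fintype ι] {W : Finset X} {B : ι → Finset X} {e : ι → ℕ}

/-- Disjoint blocks outside `W` whose sizes are distinct powers of two, scaled by a factor
exceeding `#W`. The binary expansion of `#C / (#W + 1)` then tells which blocks make up a set `C`
that splits no block. -/
structure IsDyadicFamily (W : Finset X) (B : ι → Finset X) (e : ι → ℕ) : Prop where
  injective : Function.Injective e
  card_block : ∀ i, #(B i) = (#W + 1) * 2 ^ e i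
  disjoint_base : ∀ i, Disjoint (B i) W
  pairwise_disjoint : Pairwise fun i j => Disjoint (B i) (B j)

lemma IsDyadicFamily.card_div (hB : IsDyadicFamily W B e) {C : Finset X}
    (hC : C ⊆ W ∪ univ.biUnion B) (hsat : ∀ i, B i ⊆ C ∨ Disjoint (B i) C) :
    #C / (#W + 1) = ∑ n ∈ ({i | B i ⊆ C} : Finset ι).image e, 2 ^ n := by
  have hsplit : C = (C ∩ W) ∪ ({i | B i ⊆ C} : Finset ι).biUnion B := by
    refine Subset.antisymm (fun x hx => ?_) (union_subset inter_subset_left ?_)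
    · obtain hxW | hxB := mem_union.1 (hC hx)
      · exact mem_union_left _ (mem_inter.2 ⟨hx, hxW⟩)
      · obtain ⟨i, -, hxi⟩ := mem_biUnion.1 hxB
        have hi : B i ⊆ C := (hsat i).resolve_right fun h => disjoint_left.1 h hxi hx
        exact mem_union_right _ (mem_biUnion.2 ⟨i, by simpa using hi, hxi⟩)
    · exact biUnion_subset.2 fun i hi => (mem_filter.1 hi).2
  have hdisj : Disjoint (C ∩ W) (({i | B i ⊆ C} : Finset ι).biUnion B) :=
    (disjoint_biUnion_right _ _ _).2 fun i _ =>
      (hB.disjoint_base i).symm.mono_left inter_subset_right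
  have hcard : #C = #(C ∩ W) + (#W + 1) * ∑ i with B i ⊆ C, 2 ^ e i := by
    conv_lhs => rw [hsplit]
    rw [card_union_of_disjoint hdisj, card_biUnion fun i _ j _ hij => hB.pairwise_disjoint hij,
      sum_congr rfl fun i _ => hB.card_block i, mul_sum]
  have hlt : #(C ∩ W) < #W + 1 := Nat.lt_succ_of_le (card_le_card inter_subset_right)
  rw [hcard, Nat.add_mul_div_left _ _ (Nat.succ_pos _), Nat.div_eq_of_lt hlt, zero_add,
    sum_image hB.injective.injOn]

lemma IsDyadicFamily.block_subset_of_card_eq (hB : IsDyadicFamily W B e) {C D : Finset X}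
    (hC : C ⊆ W ∪ univ.biUnion B) (hCsat : ∀ i, B i ⊆ C ∨ Disjoint (B i) C)
    (hD : D ⊆ W ∪ univ.biUnion B) (hDsat : ∀ i, B i ⊆ D ∨ Disjoint (B i) D)
    (hcard : #C = #D) {i : ι} (hi : B i ⊆ C) : B i ⊆ D := by
  have hsum := hB.card_div hC hCsat
  rw [hcard, hB.card_div hD hDsat] at hsum
  have hmem : e i ∈ ({i | B i ⊆ D} : Finset ι).image e := by
    rw [geomSum_injective le_rfl hsum]
    exact mem_image_of_mem e (by simpa using hi)
  simpa [hB.injective.eq_iff] using hmem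

end Dyadic

section Twins

variable {X : Type*} {Γ : SimpleGraph X} {V : Finset X} {x y z : X}

/-- Two vertices are twins on `V` if no third vertex of `V` distinguishes them. -/
def IsTwinOn (Γ : SimpleGraph X) (V : Finset X) (x y : X) : Prop :=
  ∀ z ∈ V, z ≠ x → z ≠ y → (Γ.Adj x z ↔ Γ.Adj y z)

lemma IsTwinOn.refl (Γ : SimpleGraph X) (V : Finset X) (x : X) : IsTwinOn Γ V x x :=
  fun _ _ _ _ => Iff.rfl

lemma IsTwinOn.symm (h : IsTwinOn Γ V x y) : IsTwinOn Γ V y x :=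
  fun z hz hzy hzx => (h z hz hzx hzy).symm

lemma IsTwinOn.trans (h : IsTwinOn Γ V x y) (h' : IsTwinOn Γ V y z) (hx : x ∈ V) (hz : z ∈ V) :
    IsTwinOn Γ V x z := by
  intro t ht htx htz
  by_cases hty : t = y
  · subst hty
    by_cases hxz : x = z
    · rw [hxz]
    calc Γ.Adj x t ↔ Γ.Adj z x := by rw [Γ.adj_comm, h' x hx htx.symm hxz]
      _ ↔ Γ.Adj z t := by rw [Γ.adj_comm, h z hz (Ne.symm hxz) htz.symm, Γ.adj_comm]
  · exact (h t ht htx hty).trans (h' t ht hty htz)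

lemma isTwinOn_map_iff {g : Equiv.Perm X} (hg : g ∈ autGroup Γ) (hV : ∀ x, g x ∈ V ↔ x ∈ V) :
    IsTwinOn Γ V (g x) (g y) ↔ IsTwinOn Γ V x y := by
  refine g.surjective.forall.trans (forall_congr' fun z => ?_)
  rw [hV, mem_autGroup.1 hg, mem_autGroup.1 hg, g.injective.ne_iff, g.injective.ne_iff]

variable {ι : Type*} [DecidableEq X] [Fintype ι] {W : Finset X} {B : ι → Finset X} {e : ι → ℕ}

open scoped Classical in
lemma IsDyadicFamily.isTwinOn_apply (hB : IsDyadicFamily W B e) (hV : V = W ∪ univ.biUnion B)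
    (htwin : ∀ i, ∀ b ∈ B i, ∀ b' ∈ B i, IsTwinOn Γ V b b') {g : Equiv.Perm X}
    (hg : g ∈ autGroup Γ) (hgV : ∀ x, g x ∈ V ↔ x ∈ V) {i : ι} {b : X} (hb : b ∈ B i) :
    IsTwinOn Γ V (g b) b := by
  let twins (x : X) : Finset X := {y ∈ V | IsTwinOn Γ V x y}
  have hBV (j : ι) : B j ⊆ V := hV ▸ (subset_biUnion_of_mem B (mem_univ j)).trans subset_union_right
  have hsub (x : X) : twins x ⊆ W ∪ univ.biUnion B := hV ▸ filter_subset _ _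
  have hsat {x : X} (hx : x ∈ V) (j : ι) : B j ⊆ twins x ∨ Disjoint (B j) (twins x) := by
    rw [or_iff_not_imp_right, not_disjoint_iff]
    rintro ⟨c, hcj, hcx⟩ c' hc'
    exact mem_filter.2
      ⟨hBV j hc', (mem_filter.1 hcx).2.trans (htwin j c hcj c' hc') hx (hBV j hc')⟩
  have hmap : (twins b).map g.toEmbedding = twins (g b) := by
    ext y
    obtain ⟨z, rfl⟩ := g.surjective y
    simp [twins, hgV, isTwinOn_map_iff hg hgV]
  have hcard : #(twins b) = #(twins (g b)) := by rw [← hmap, card_map]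
  have hbV : b ∈ V := hBV i hb
  have hbb : B i ⊆ twins b := fun c hc => mem_filter.2 ⟨hBV i hc, htwin i b hb c hc⟩
  exact (mem_filter.1 (hB.block_subset_of_card_eq (hsub b) (hsat hbV) (hsub (g b))
    (hsat ((hgV b).2 hbV)) hcard hbb hb)).2

end Twins

section Blowup

variable {X ι : Type*} {Γ : SimpleGraph X}

/-- The limit row of an ultrafilter: `x` is adjacent to `p`-almost all vertices. -/
def LimAdj (Γ : SimpleGraph X) (p : Ultrafilter X) (x : X) : Prop :=
  ∀ᶠ t in p, Γ.Adj t x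

lemma eventually_iff_eventually (p : Ultrafilter X) (P : X → Prop) :
    ∀ᶠ t in p, (P t ↔ ∀ᶠ s in p, P s) := by
  by_cases h : ∀ᶠ s in p, P s
  · simp only [h, iff_true]
  · simpa only [h, iff_false] using Ultrafilter.eventually_not.2 h

lemma eventually_notMem_of_le_cofinite {p : Ultrafilter X} (hp : (p : Filter X) ≤ cofinite)
    (W : Finset X) : ∀ᶠ t in p, t ∉ W :=
  hp W.finite_toSet.eventually_cofinite_notMem

lemma exists_indiscernible_seq [Finite ι] (p : ι → Ultrafilter X)
    (hp : ∀ i, (p i : Filter X) ≤ cofinite) (W : Finset X) :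
    ∃ f : ℕ → ι → X,
      (∀ n i, f n i ∉ W ∧ ∀ z ∈ W, (Γ.Adj (f n i) z ↔ LimAdj Γ (p i) z)) ∧
      ∀ m n, m < n → ∀ i j, f m i ≠ f n j ∧
        (Γ.Adj (f n j) (f m i) ↔ ∀ᶠ s in p i, LimAdj Γ (p j) s) := by
  let IsTypical (t : ι → X) : Prop := ∀ i,
    (t i ∉ W ∧ ∀ z ∈ W, (Γ.Adj (t i) z ↔ LimAdj Γ (p i) z)) ∧
    ∀ j, (LimAdj Γ (p j) (t i) ↔ ∀ᶠ s in p i, LimAdj Γ (p j) s)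
  let Precedes (s t : ι → X) : Prop := ∀ i j,
    s i ≠ t j ∧ (Γ.Adj (t j) (s i) ↔ ∀ᶠ s' in p i, LimAdj Γ (p j) s')
  have hstep (S : Finset (ι → X)) (hS : ∀ s ∈ S, IsTypical s) :
      ∃ t, IsTypical t ∧ ∀ s ∈ S, Precedes s t := by
    have hev (j : ι) : ∀ᶠ t in p j, ((t ∉ W ∧ ∀ z ∈ W, (Γ.Adj t z ↔ LimAdj Γ (p j) z)) ∧
        ∀ k, (LimAdj Γ (p k) t ↔ ∀ᶠ s in p j, LimAdj Γ (p k) s)) ∧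
        ∀ s ∈ S, ∀ i, s i ≠ t ∧ (Γ.Adj t (s i) ↔ LimAdj Γ (p j) (s i)) := by
      refine (((eventually_notMem_of_le_cofinite (hp j) W).and ?_).and ?_).and ?_
      · exact (Finset.eventually_all W).2 fun z _ => eventually_iff_eventually (p j) _
      · exact eventually_all.2 fun k => eventually_iff_eventually (p j) _
      · refine (Finset.eventually_all S).2 fun s _ => eventually_all.2 fun i =>
          Eventually.and ?_ (eventually_iff_eventually (p j) _)
        exact (eventually_notMem_of_le_cofinite (hp j) {s i}).mono fun t ht h => ht (by simp [h])
    choose t ht hts using fun j => (hev j).exists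
    exact ⟨t, ht, fun s hs i j => ⟨(hts j s hs i).1, (hts j s hs i).2.trans ((hS s hs i).2 j)⟩⟩
  obtain ⟨f, hf, hff⟩ := exists_seq_of_forall_finset_exists IsTypical Precedes hstep
  exact ⟨f, fun n i => (hf n i).1, hff⟩

variable {p : ι → Ultrafilter X} {W : Finset X} {B : ι → Finset X} {e : ι → ℕ}

/-- Finite blocks of vertices outside `W`, the `i`-th of which approximates the ultrafilter `p i`,
both in its adjacencies to `W` and in its adjacencies to the blocks with smaller `e`. -/
structure IsBlowup (Γ : SimpleGraph X) (p : ι → Ultrafilter X) (W : Finset X) (B : ι → Finset X)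
    (e : ι → ℕ) : Prop extends IsDyadicFamily W B e where
  adj_base : ∀ i, ∀ b ∈ B i, ∀ z ∈ W, Γ.Adj b z ↔ LimAdj Γ (p i) z
  adj_block : ∀ i j, e i ≤ e j → ∀ s ∈ B i, ∀ t ∈ B j, s ≠ t →
    (Γ.Adj t s ↔ ∀ᶠ s' in p i, LimAdj Γ (p j) s')

lemma exists_isBlowup [Finite ι] (Γ : SimpleGraph X) (hp : ∀ i, (p i : Filter X) ≤ cofinite)
    (W : Finset X) : ∃ (B : ι → Finset X) (e : ι → ℕ), IsBlowup Γ p W B e := by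
  classical
  obtain ⟨e, he⟩ := Countable.exists_injective_nat ι
  obtain ⟨f, hfW, hff⟩ := exists_indiscernible_seq (Γ := Γ) p hp W
  let positions (i : ι) : Finset ℕ := Ico ((#W + 1) * 2 ^ e i) ((#W + 1) * 2 ^ (e i + 1))
  have hlt {i j : ι} (hij : e i < e j) {m n : ℕ} (hm : m ∈ positions i) (hn : n ∈ positions j) :
      m < n :=
    calc m < (#W + 1) * 2 ^ (e i + 1) := (mem_Ico.1 hm).2
      _ ≤ (#W + 1) * 2 ^ e j := by gcongr <;> omega
      _ ≤ n := (mem_Ico.1 hn).1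
  have hinj (i : ι) : Function.Injective fun n => f n i :=
    Function.Injective.of_lt_imp_ne fun m n hmn => (hff m n hmn i i).1
  refine ⟨fun i => (positions i).image fun n => f n i, e,
    ⟨he, fun i => ?_, fun i => ?_, fun i j hij => ?_⟩, fun i => ?_, fun i j hij => ?_⟩
  · rw [card_image_of_injective _ (hinj i), Nat.card_Ico, pow_succ, ← mul_assoc]
    omega
  · simp only [disjoint_left, forall_mem_image]
    exact fun n _ => (hfW n i).1
  · refine disjoint_left.2 (forall_mem_image.2 ?_)
    simp only [mem_image, not_exists, not_and]
    intro m hm n hn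
    obtain h | h := (he.ne hij).lt_or_gt
    · exact (hff m n (hlt h hm hn) i j).1.symm
    · exact (hff n m (hlt h hn hm) j i).1
  · simp only [forall_mem_image]
    exact fun n _ => (hfW n i).2
  · simp only [forall_mem_image]
    intro m hm n hn hne
    obtain h | h := hij.lt_or_eq
    · exact (hff m n (hlt h hm hn) i j).2
    obtain rfl := he h
    obtain hmn | rfl | hmn := lt_trichotomy m n
    · exact (hff m n hmn i i).2
    · exact absurd rfl hne
    · rw [Γ.adj_comm]
      exact (hff n m hmn i i).2

variable [DecidableEq X] [Fintype ι]

lemma IsBlowup.isTwinOn_of_mem_block (hB : IsBlowup Γ p W B e) {i : ι} {b b' : X} (hb : b ∈ B i)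
    (hb' : b' ∈ B i) : IsTwinOn Γ (W ∪ univ.biUnion B) b b' := by
  intro z hz hzb hzb'
  obtain hzW | hzB := mem_union.1 hz
  · rw [hB.adj_base i b hb z hzW, hB.adj_base i b' hb' z hzW]
  obtain ⟨j, -, hzj⟩ := mem_biUnion.1 hzB
  obtain hij | hji := le_total (e i) (e j)
  · rw [Γ.adj_comm b, Γ.adj_comm b', hB.adj_block i j hij b hb z hzj hzb.symm,
      hB.adj_block i j hij b' hb' z hzj hzb'.symm]
  · rw [hB.adj_block j i hji z hzj b hb hzb, hB.adj_block j i hji z hzj b' hb' hzb']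

lemma IsBlowup.not_isTwinOn (hB : IsBlowup Γ p W B e) {u : X} (hu : u ∈ W) {i : ι}
    (hout : (∃ z ∈ W, z ≠ u ∧ ¬(Γ.Adj u z ↔ LimAdj Γ (p i) z)) ∨
      ∃ j, ¬(LimAdj Γ (p j) u ↔ ∀ᶠ s in p i, LimAdj Γ (p j) s) ∧
        ¬(LimAdj Γ (p j) u ↔ ∀ᶠ s in p j, LimAdj Γ (p i) s))
    {b : X} (hb : b ∈ B i) : ¬ IsTwinOn Γ (W ∪ univ.biUnion B) u b := by
  intro htwin
  have hbase {j : ι} {c z : X} (hc : c ∈ B j) (hz : z ∈ W) : z ≠ c := fun h =>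
    disjoint_left.1 (hB.disjoint_base j) hc (h ▸ hz)
  obtain ⟨z, hz, hzu, hdiff⟩ | ⟨j, hji, hij⟩ := hout
  · refine hdiff ?_
    rw [← hB.adj_base i b hb z hz]
    exact htwin z (mem_union_left _ hz) hzu (hbase hb hz)
  have hcard : 1 < #(B j) := by
    rw [hB.card_block]
    have := Nat.one_le_two_pow (n := e j)
    have := card_pos.2 ⟨u, hu⟩
    nlinarith
  obtain ⟨c, hc, hcb⟩ := exists_mem_ne hcard b
  have hcu : LimAdj Γ (p j) u ↔ Γ.Adj c b := by
    rw [← hB.adj_base j c hc u hu, Γ.adj_comm c u, Γ.adj_comm c b]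
    exact htwin c (mem_union_right _ (mem_biUnion.2 ⟨j, mem_univ j, hc⟩)) (hbase hc hu).symm hcb
  obtain h | h := le_total (e i) (e j)
  · exact hji (hcu.trans (hB.adj_block i j h b hb c hc hcb.symm))
  · exact hij (hcu.trans ((Γ.adj_comm c b).trans (hB.adj_block j i h c hc b hb hcb)))

lemma IsBlowup.apply_eq_self (hB : IsBlowup Γ p W B e) {U : Finset X} (hUW : U ⊆ W)
    (hsep : ∀ u ∈ U, ∀ w ∈ W, u ≠ w → ∃ i, ¬(LimAdj Γ (p i) u ↔ LimAdj Γ (p i) w))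
    (hout : ∀ u ∈ U, ∀ i, ∀ b ∈ B i, ¬ IsTwinOn Γ (W ∪ univ.biUnion B) u b)
    {g : Equiv.Perm X} (hg : g ∈ autGroup Γ)
    (hgV : ∀ x, g x ∈ W ∪ univ.biUnion B ↔ x ∈ W ∪ univ.biUnion B) {u : X} (hu : u ∈ U) :
    g u = u := by
  have htwin {i : ι} {b : X} (hb : b ∈ B i) : IsTwinOn Γ (W ∪ univ.biUnion B) (g b) b :=
    hB.isTwinOn_apply rfl (fun _ _ h _ h' => hB.isTwinOn_of_mem_block h h') hg hgV hb
  have hBV {i : ι} {b : X} (hb : b ∈ B i) : b ∈ W ∪ univ.biUnion B :=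
    mem_union_right _ (mem_biUnion.2 ⟨i, mem_univ i, hb⟩)
  have huV : u ∈ W ∪ univ.biUnion B := mem_union_left _ (hUW hu)
  have hout' {i : ι} {b : X} (hb : b ∈ B i) : ¬ IsTwinOn Γ (W ∪ univ.biUnion B) (g u) b := fun h =>
    hout u hu i b hb <| (isTwinOn_map_iff hg hgV).1 <|
      h.trans (htwin hb).symm ((hgV u).2 huV) ((hgV b).2 (hBV hb))
  have hguW : g u ∈ W := (mem_union.1 ((hgV u).2 huV)).resolve_right fun h => by
    obtain ⟨i, -, hi⟩ := mem_biUnion.1 h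
    exact hout' hi (IsTwinOn.refl _ _ _)
  by_contra hne
  obtain ⟨i, hi⟩ := hsep u hu (g u) hguW (Ne.symm hne)
  obtain ⟨b, hb⟩ : (B i).Nonempty := by
    rw [← card_pos, hB.card_block]
    positivity
  have hbu : b ≠ u := fun h => hout u hu i b hb (h ▸ IsTwinOn.refl _ _ _)
  have hgub : g u ≠ b := fun h => hout' hb (h ▸ IsTwinOn.refl _ _ _)
  refine hi ?_
  rw [← hB.adj_base i b hb u (hUW hu), ← hB.adj_base i b hb (g u) hguW, ← mem_autGroup.1 hg b u]
  exact htwin hb (g u) ((hgV u).2 huV) (g.injective.ne hbu.symm) hgub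

end Blowup

section InfiniteRowDiff

variable {X : Type*} {Γ : SimpleGraph X}

lemma exists_rigid_of_ultrafilters {ι : Type*} [Finite ι] {p : ι → Ultrafilter X}
    (hp : ∀ i, (p i : Filter X) ≤ cofinite) {U W : Finset X} (hUW : U ⊆ W)
    (hsep : ∀ u ∈ U, ∀ w ∈ W, u ≠ w → ∃ i, ¬(LimAdj Γ (p i) u ↔ LimAdj Γ (p i) w))
    (hout : ∀ u ∈ U, ∀ i, (∃ z ∈ W, z ≠ u ∧ ¬(Γ.Adj u z ↔ LimAdj Γ (p i) z)) ∨
      ∃ j, ¬(LimAdj Γ (p j) u ↔ ∀ᶠ s in p i, LimAdj Γ (p j) s) ∧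
        ¬(LimAdj Γ (p j) u ↔ ∀ᶠ s in p j, LimAdj Γ (p i) s)) :
    ∃ V : Finset X, U ⊆ V ∧
      ∀ g ∈ autGroup Γ, (∀ x, g x ∈ V ↔ x ∈ V) → ∀ x ∈ U, g x = x := by
  classical
  cases nonempty_fintype ι
  obtain ⟨B, e, hB⟩ := exists_isBlowup Γ hp W
  exact ⟨W ∪ univ.biUnion B, hUW.trans subset_union_left, fun g hg hgV u hu =>
    hB.apply_eq_self hUW hsep
      (fun u hu i b hb => hB.not_isTwinOn (hUW hu) (hout u hu i) hb) hg hgV hu⟩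

lemma exists_ultrafilter_of_rowDiff_infinite {x y : X} (h : (rowDiff Γ.Adj x y).Infinite) :
    ∃ p : Ultrafilter X, (p : Filter X) ≤ cofinite ∧ ¬(LimAdj Γ p x ↔ LimAdj Γ p y) := by
  have : NeBot (cofinite ⊓ 𝓟 (rowDiff Γ.Adj x y)) := h.cofinite_inf_principal_neBot
  obtain ⟨p, hp⟩ := Ultrafilter.exists_le (cofinite ⊓ 𝓟 (rowDiff Γ.Adj x y))
  have hmem : ∀ᶠ t in p, t ∈ rowDiff Γ.Adj x y := le_principal_iff.1 (hp.trans inf_le_right)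
  refine ⟨p, hp.trans inf_le_left, fun hxy => ?_⟩
  obtain ⟨t, ht, htx, hty⟩ := (hmem.and ((eventually_iff_eventually p (Γ.Adj · x)).and
    (eventually_iff_eventually p (Γ.Adj · y)))).exists
  rw [mem_rowDiff_adj, Γ.adj_comm x, Γ.adj_comm y] at ht
  exact ht (htx.trans (hxy.trans hty.symm))

/-- The row of `v`, away from the diagonal, is isolated among the rows outside `D`, as witnessed by
the columns in `D`. -/
def IsIsolatedBy (Γ : SimpleGraph X) (v : X) (D : Finset X) : Prop :=
  ∀ x ∉ D, ∃ z ∈ D, z ≠ v ∧ ¬(Γ.Adj v z ↔ Γ.Adj x z)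

lemma limAdj_iff_of_eventually {p : Ultrafilter X} {v z : X}
    (h : ∀ᶠ t in p, (Γ.Adj t z ↔ Γ.Adj v z)) : LimAdj Γ p z ↔ Γ.Adj v z :=
  (eventually_congr h).trans eventually_const

lemma exists_isIsolatedBy_or_exists_limAdj_iff (Γ : SimpleGraph X) (v : X) :
    (∃ D, IsIsolatedBy Γ v D) ∨
      ∃ p : Ultrafilter X, (p : Filter X) ≤ cofinite ∧ ∀ z, z ≠ v → (LimAdj Γ p z ↔ Γ.Adj v z) := by
  rw [or_iff_not_imp_left]
  intro h
  simp only [IsIsolatedBy, not_exists, not_forall, not_and, not_not] at h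
  choose x hxD hx using h
  have hlarge (z : X) : ∀ᶠ D in (atTop : Filter (Finset X)), z ∈ D :=
    (eventually_ge_atTop {z}).mono fun D hD => singleton_subset_iff.1 hD
  have hp : (Ultrafilter.of (map x atTop) : Filter X) ≤ map x atTop := Ultrafilter.of_le _
  refine ⟨Ultrafilter.of (map x atTop), hp.trans (le_cofinite_iff_eventually_ne.2 fun z => ?_),
    fun z hz => limAdj_iff_of_eventually (hp ?_)⟩
  · exact eventually_map.2 ((hlarge z).mono fun D hD h => hxD D (h ▸ hD))
  · exact eventually_map.2 ((hlarge z).mono fun D hD => (hx D z hD hz).symm)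

lemma isLocallyRigid_of_isIsolatedBy (hdiff : ∀ x y, x ≠ y → (rowDiff Γ.Adj x y).Infinite)
    (hiso : ∀ v, ∃ D, IsIsolatedBy Γ v D) : IsLocallyRigid (autGroup Γ) := by
  classical
  intro U
  choose D hD using hiso
  let W : Finset X := U ∪ U.biUnion D
  have hUW : U ⊆ W := subset_union_left
  have hpair (q : W.offDiag) : ∃ p : Ultrafilter X, (p : Filter X) ≤ cofinite ∧
      ¬(LimAdj Γ p q.1.1 ↔ LimAdj Γ p q.1.2) :=
    exists_ultrafilter_of_rowDiff_infinite (hdiff _ _ (mem_offDiag.1 q.2).2.2)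
  choose p hp hsep using hpair
  refine exists_rigid_of_ultrafilters hp hUW
    (fun u hu w hw huw => ⟨⟨(u, w), mem_offDiag.2 ⟨hUW hu, hw, huw⟩⟩, hsep _⟩)
    fun u hu i => Or.inl ?_
  obtain ⟨t, htW, htlim⟩ := ((eventually_notMem_of_le_cofinite (hp i) W).and
    ((Finset.eventually_all W).2 fun z _ => eventually_iff_eventually (p i) (Γ.Adj · z))).exists
  have hDW : D u ⊆ W := (subset_biUnion_of_mem D hu).trans subset_union_right
  obtain ⟨z, hz, hzu, hdz⟩ := hD u t fun h => htW (hDW h)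
  exact ⟨z, hDW hz, hzu, fun h => hdz (h.trans (htlim z (hDW hz)).symm)⟩

/-- The rows of the vertices in `S` are told apart by the columns in `F`. -/
def IsSeparatedBy (Γ : SimpleGraph X) (S F : Finset X) : Prop :=
  (S : Set X).Pairwise fun x y => ∃ z ∈ F, z ∈ rowDiff Γ.Adj x y

lemma IsSeparatedBy.mono {S F F' : Finset X} (h : IsSeparatedBy Γ S F) (hF : F ⊆ F') :
    IsSeparatedBy Γ S F' := fun _ hx _ hy hxy =>
  let ⟨z, hz, hzd⟩ := h hx hy hxy
  ⟨z, hF hz, hzd⟩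

protected lemma IsSeparatedBy.insert [DecidableEq X] {S F : Finset X} (h : IsSeparatedBy Γ S F)
    {a : X} (ha : ∀ b ∈ S, a ≠ b → ∃ z ∈ F, z ∈ rowDiff Γ.Adj a b) :
    IsSeparatedBy Γ (insert a S) F := by
  have : Std.Symm fun x y => ∃ z ∈ F, z ∈ rowDiff Γ.Adj x y :=
    ⟨fun x y hxy => by simpa only [rowDiff_comm _ x y] using hxy⟩
  rw [IsSeparatedBy, coe_insert]
  exact Set.Pairwise.insert_of_symm h ha

lemma IsSeparatedBy.insert_insert [DecidableEq X] {F : Finset X} (hF : IsSeparatedBy Γ F F)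
    {a x z : X} (hx : x ∈ F) (hagree : ∀ y ∈ insert a F, y ∉ rowDiff Γ.Adj x a)
    (hz : z ∈ rowDiff Γ.Adj x a) :
    IsSeparatedBy Γ (insert z (insert a F)) (insert z (insert a F)) := by
  have haF : F ⊆ insert z (insert a F) := (subset_insert a F).trans (subset_insert z _)
  refine ((hF.mono haF).insert fun y hy hay => ?_).insert fun y hy _ => ?_
  · obtain rfl | hxy := eq_or_ne x y
    · exact ⟨z, mem_insert_self z _, by rwa [rowDiff_comm]⟩
    obtain ⟨w, hw, hwd⟩ := hF hx hy hxy
    exact ⟨w, haF hw, ((rowDiff_subset_union _ x a y) hwd).resolve_left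
      (hagree w (mem_insert_of_mem hw))⟩
  · -- The columns of `x` and `a` differ in row `z` but agree in row `y`.
    by_contra! h
    have hzx := h x (haF hx)
    have hza := h a (mem_insert_of_mem (mem_insert_self a F))
    have hy := hagree y hy
    simp only [mem_rowDiff_adj, not_not, Γ.adj_comm z, Γ.adj_comm y] at hz hzx hza hy
    exact hz (hzx.trans (hy.trans hza.symm))

lemma exists_superset_isSeparatedBy (hdiff : ∀ x y, x ≠ y → (rowDiff Γ.Adj x y).Nonempty)
    (F₀ : Finset X) : ∃ F, F₀ ⊆ F ∧ IsSeparatedBy Γ F F := by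
  classical
  induction F₀ using Finset.induction_on with
  | empty => exact ⟨∅, Subset.rfl, by simp [IsSeparatedBy]⟩
  | insert a F₁ _ ih =>
    obtain ⟨F, hF₁, hF⟩ := ih
    by_cases hnew : ∀ x ∈ F, a ≠ x → ∃ z ∈ insert a F, z ∈ rowDiff Γ.Adj a x
    · exact ⟨insert a F, insert_subset_insert a hF₁, (hF.mono (subset_insert a F)).insert hnew⟩
    push Not at hnew
    obtain ⟨x, hx, hax, hagree⟩ := hnew
    obtain ⟨z, hz⟩ := hdiff x a hax.symm
    rw [rowDiff_comm] at hagree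
    exact ⟨insert z (insert a F), (insert_subset_insert a hF₁).trans (subset_insert z _),
      hF.insert_insert hx hagree hz⟩

lemma exists_rowDiff_notMem {P : X → Ultrafilter X} (hP : ∀ v, (P v : Filter X) ≤ cofinite)
    (hlim : ∀ v z, LimAdj Γ (P v) z ↔ Γ.Adj v z) {x y : X} (h : (rowDiff Γ.Adj x y).Nonempty)
    (U : Finset X) : ∃ t ∉ U, t ∈ rowDiff Γ.Adj x y := by
  obtain ⟨z, hz⟩ := h
  obtain ⟨t, htU, htx, hty⟩ := ((eventually_notMem_of_le_cofinite (hP z) U).and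
    ((eventually_iff_eventually (P z) (Γ.Adj · x)).and
      (eventually_iff_eventually (P z) (Γ.Adj · y)))).exists
  refine ⟨t, htU, ?_⟩
  rw [mem_rowDiff_adj, Γ.adj_comm x, Γ.adj_comm y] at hz ⊢
  rwa [htx.trans (hlim z x), hty.trans (hlim z y)]

lemma isLocallyRigid_of_limAdj_iff (hdiff : ∀ x y, x ≠ y → (rowDiff Γ.Adj x y).Nonempty)
    (hlim : ∀ v, ∃ p : Ultrafilter X, (p : Filter X) ≤ cofinite ∧
      ∀ z, LimAdj Γ p z ↔ Γ.Adj v z) : IsLocallyRigid (autGroup Γ) := by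
  classical
  intro U
  choose P hP hPlim using hlim
  have hiter (v w : X) : (∀ᶠ s in P v, LimAdj Γ (P w) s) ↔ Γ.Adj v w := by
    simp only [hPlim w, Γ.adj_comm w]
    exact hPlim v w
  choose t htU ht using fun q : U.offDiag =>
    exists_rowDiff_notMem hP hPlim (hdiff _ _ (mem_offDiag.1 q.2).2.2) U
  obtain ⟨F, hF₀, hF⟩ := exists_superset_isSeparatedBy hdiff (U ∪ univ.image t)
  refine exists_rigid_of_ultrafilters (ι := ↥(F \ U)) (p := fun v => P v) (fun v => hP v)
    Subset.rfl (fun u hu w hw huw => ?_) fun u hu ⟨v, hv⟩ => ?_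
  · let q : U.offDiag := ⟨(u, w), mem_offDiag.2 ⟨hu, hw, huw⟩⟩
    have htF : t q ∈ F := hF₀ (mem_union_right _ (mem_image_of_mem t (mem_univ q)))
    refine ⟨⟨t q, mem_sdiff.2 ⟨htF, htU q⟩⟩, ?_⟩
    rw [hPlim, hPlim, Γ.adj_comm _ u, Γ.adj_comm _ w, ← mem_rowDiff_adj]
    exact ht q
  obtain ⟨hvF, hvU⟩ := mem_sdiff.1 hv
  obtain ⟨z, hzF, hz⟩ := hF (hF₀ (mem_union_left _ hu)) hvF fun h => hvU (h ▸ hu)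
  rw [mem_rowDiff_adj] at hz
  simp only [hiter]
  simp only [hPlim]
  by_cases hzU : z ∈ U
  · obtain rfl | hzu := eq_or_ne z u
    · exact Or.inr ⟨⟨v, hv⟩, by simpa using hz, by simpa using hz⟩
    · exact Or.inl ⟨z, hzU, hzu, hz⟩
  · refine Or.inr ⟨⟨z, mem_sdiff.2 ⟨hzF, hzU⟩⟩, ?_, ?_⟩
    · rwa [Γ.adj_comm z u]
    · rwa [Γ.adj_comm z u, Γ.adj_comm z v]

lemma limAdj_map_iff {p : Ultrafilter X} {g : Equiv.Perm X} (hg : g ∈ autGroup Γ) (z : X) :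
    LimAdj Γ (p.map g) (g z) ↔ LimAdj Γ p z :=
  eventually_map.trans (eventually_congr (Eventually.of_forall fun _ => mem_autGroup.1 hg _ _))

lemma isLocallyRigid_of_exists_limAdj_iff (htrans : ∀ x y, ∃ g ∈ autGroup Γ, g x = y)
    (hdiff : ∀ x y, x ≠ y → (rowDiff Γ.Adj x y).Nonempty) {v : X} {p : Ultrafilter X}
    (hp : (p : Filter X) ≤ cofinite) (hlim : ∀ z, LimAdj Γ p z ↔ Γ.Adj v z) :
    IsLocallyRigid (autGroup Γ) := by
  refine isLocallyRigid_of_limAdj_iff hdiff fun w => ?_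
  obtain ⟨g, hg, rfl⟩ := htrans v w
  refine ⟨p.map g, (map_mono hp).trans g.injective.tendsto_cofinite, fun z => ?_⟩
  obtain ⟨z, rfl⟩ := g.surjective z
  rw [limAdj_map_iff hg, hlim, mem_autGroup.1 hg]

lemma limAdj_compl_iff {p : Ultrafilter X} (hp : (p : Filter X) ≤ cofinite) (z : X) :
    LimAdj Γᶜ p z ↔ ¬ LimAdj Γ p z := by
  have hne : ∀ᶠ t in p, t ≠ z := le_cofinite_iff_eventually_ne.1 hp z
  refine (eventually_congr (hne.mono fun t ht => ?_)).trans Ultrafilter.eventually_not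
  simp only [SimpleGraph.compl_adj, ne_eq, ht, not_false_eq_true, true_and]

lemma rowDiff_compl_nonempty {x y : X} (h : (rowDiff Γ.Adj x y).Infinite) :
    (rowDiff Γᶜ.Adj x y).Nonempty := by
  obtain ⟨z, hz, hzxy⟩ := h.exists_notMem_finite (Set.toFinite {x, y})
  simp only [Set.mem_insert_iff, Set.mem_singleton_iff, not_or] at hzxy
  refine ⟨z, ?_⟩
  simpa [mem_rowDiff_adj, Ne.symm hzxy.1, Ne.symm hzxy.2, not_iff_not] using hz

theorem isLocallyRigid_autGroup_of_rowDiff_infinite (htrans : ∀ x y, ∃ g ∈ autGroup Γ, g x = y)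
    (hdiff : ∀ x y, x ≠ y → (rowDiff Γ.Adj x y).Infinite) : IsLocallyRigid (autGroup Γ) := by
  by_cases hiso : ∀ v, ∃ D, IsIsolatedBy Γ v D
  · exact isLocallyRigid_of_isIsolatedBy hdiff hiso
  obtain ⟨v, hv⟩ := not_forall.1 hiso
  obtain ⟨p, hp, hlim⟩ := (exists_isIsolatedBy_or_exists_limAdj_iff Γ v).resolve_left hv
  -- Passing to the complement makes the limit row agree with the row of `v` at `v` as well.
  by_cases hpv : LimAdj Γ p v
  · have hcompl (z : X) : LimAdj Γᶜ p z ↔ Γᶜ.Adj v z := by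
      rw [limAdj_compl_iff hp, SimpleGraph.compl_adj]
      obtain rfl | hz := eq_or_ne z v
      · simpa using hpv
      · simp [hlim z hz, hz.symm]
    refine (isLocallyRigid_of_exists_limAdj_iff (fun x y => ?_)
      (fun x y hxy => rowDiff_compl_nonempty (hdiff x y hxy)) hp hcompl).mono (autGroup_compl_le Γ)
    obtain ⟨g, hg, hgx⟩ := htrans x y
    exact ⟨g, autGroup_compl_le Γ hg, hgx⟩
  · have hdiag (z : X) : LimAdj Γ p z ↔ Γ.Adj v z := by
      obtain rfl | hz := eq_or_ne z v
      · simpa using hpv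
      · exact hlim z hz
    exact isLocallyRigid_of_exists_limAdj_iff htrans (fun x y hxy => (hdiff x y hxy).nonempty) hp
      hdiag

end InfiniteRowDiff

section FiniteBalls

variable {X : Type*} {d : X → X → ℕ}

lemma exists_mem_far (hball : ∀ x n, {y | d y x ≤ n}.Finite) {S : Set X} (hS : S.Infinite)
    (V : Finset X) (N : ℕ) : ∃ p ∈ S, ∀ x ∈ V, N < d p x := by
  obtain ⟨p, hpS, hp⟩ := hS.exists_notMem_finite (V.finite_toSet.biUnion fun x _ => hball x N)
  exact ⟨p, hpS, fun x hx => not_le.1 fun h => hp (Set.mem_biUnion hx h)⟩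

lemma apply_eq_self_of_far [DecidableEq X] {g : Equiv.Perm X}
    (hg : ∀ x y, d (g x) (g y) = d x y) {V : Finset X} (hV : 1 < #V) {N : ℕ}
    (hN : ∀ x ∈ V, ∀ y ∈ V, d x y ≤ N) {p : X} (hp : ∀ x ∈ V, N < d p x)
    (hgV : ∀ x, g x ∈ insert p V ↔ x ∈ insert p V) : g p = p := by
  by_contra hgp
  obtain ⟨y, hy⟩ := g.surjective p
  have hyV : y ∈ V := mem_of_mem_insert_of_ne ((hgV y).1 (hy ▸ mem_insert_self p V))
    fun h => hgp (h ▸ hy)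
  obtain ⟨z, hz, hzy⟩ := exists_mem_ne hV y
  have hgz : g z ∈ V := mem_of_mem_insert_of_ne ((hgV z).2 (mem_insert_of_mem hz))
    fun h => hzy (g.injective (h.trans hy.symm))
  have hfar : N < d y z := by simpa only [← hy, hg] using hp (g z) hgz
  exact hfar.not_ge (hN y hyV z hz)

variable {G : Subgroup (Equiv.Perm X)}

lemma exists_superset_fixing_rowDiff (hd : ∀ g ∈ G, ∀ x y, d (g x) (g y) = d x y)
    (hball : ∀ x n, {y | d y x ≤ n}.Finite) {U : Finset X} (hU : 1 < #U) (S : Finset (X × X))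
    (hS : ∀ q ∈ S, (rowDiff d q.1 q.2).Infinite) :
    ∃ V : Finset X, U ⊆ V ∧ ∀ g ∈ G, (∀ x, g x ∈ V ↔ x ∈ V) →
      (∀ x, g x ∈ U ↔ x ∈ U) ∧ ∀ q ∈ S, ∃ p ∈ rowDiff d q.1 q.2, g p = p := by
  classical
  induction S using Finset.induction_on with
  | empty => exact ⟨U, Subset.rfl, fun g _ h => ⟨h, by simp⟩⟩
  | insert q S _ ih =>
    rw [forall_mem_insert] at hS
    obtain ⟨V, hUV, hV⟩ := ih hS.2
    obtain ⟨N, hN⟩ : ∃ N, ∀ x ∈ V, ∀ y ∈ V, d x y ≤ N :=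
      ⟨(V ×ˢ V).sup fun w => d w.1 w.2, fun x hx y hy =>
        le_sup (f := fun w : X × X => d w.1 w.2) (mk_mem_product hx hy)⟩
    obtain ⟨p, hpq, hp⟩ := exists_mem_far hball hS.1 V N
    refine ⟨insert p V, hUV.trans (subset_insert p V), fun g hg hgV => ?_⟩
    have hgp : g p = p :=
      apply_eq_self_of_far (hd g hg) (hU.trans_le (card_le_card hUV)) hN hp hgV
    have hgV' (x : X) : g x ∈ V ↔ x ∈ V := by
      have hxp : g x = p ↔ x = p := by rw [← g.injective.eq_iff (a := x), hgp]
      have hx := hgV x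
      rw [mem_insert, mem_insert, hxp] at hx
      by_cases h : x = p
      · simp [h, hgp]
      · simpa [h] using hx
    obtain ⟨hgU, hfix⟩ := hV g hg hgV'
    exact ⟨hgU, forall_mem_insert _ _ _ |>.2 ⟨⟨p, hpq, hgp⟩, hfix⟩⟩

theorem isLocallyRigid_of_finite_balls [Infinite X] (hd : ∀ g ∈ G, ∀ x y, d (g x) (g y) = d x y)
    (hball : ∀ x n, {y | d y x ≤ n}.Finite) (hdiff : ∀ x y, x ≠ y → (rowDiff d x y).Infinite) :
    IsLocallyRigid G := by
  classical
  intro U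
  obtain ⟨U', hUU', hcard⟩ := Infinite.exists_superset_card_eq U (#U + 2) (by omega)
  obtain ⟨V, hUV, hV⟩ := exists_superset_fixing_rowDiff hd hball (U := U') (by omega) U'.offDiag
    fun q hq => hdiff _ _ (mem_offDiag.1 hq).2.2
  refine ⟨V, hUU'.trans hUV, fun g hg hgV u hu => ?_⟩
  obtain ⟨hgU, hfix⟩ := hV g hg hgV
  by_contra hne
  obtain ⟨p, hp, hgp⟩ := hfix (g u, u) (mem_offDiag.2 ⟨(hgU u).2 (hUU' hu), hUU' hu, hne⟩)
  refine hp ?_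
  calc d (g u) p = d (g u) (g p) := by rw [hgp]
    _ = d u p := hd g hg u p

end FiniteBalls

section LocallyFinite

variable {X : Type*} {H : SimpleGraph X}

lemma exists_adj_dist_lt (hH : H.Connected) {x y : X} (hxy : x ≠ y) :
    ∃ z, H.Adj x z ∧ H.dist z y < H.dist x y := by
  obtain ⟨w, hw⟩ := hH.exists_walk_length_eq_dist x y
  cases w with
  | nil => exact absurd rfl hxy
  | cons hxz w =>
    refine ⟨_, hxz, ?_⟩
    rw [← hw, SimpleGraph.Walk.length_cons]
    exact Nat.lt_succ_of_le (H.dist_le w)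

lemma finite_setOf_dist_le (hH : H.Connected) (hfin : ∀ x, (H.neighborSet x).Finite) (x : X)
    (n : ℕ) : {y | H.dist y x ≤ n}.Finite := by
  induction n with
  | zero => simp [hH.dist_eq_zero_iff]
  | succ n ih =>
    refine ((ih.biUnion fun z _ => hfin z).insert x).subset fun y hy => ?_
    obtain rfl | hyx := eq_or_ne y x
    · exact Set.mem_insert y _
    obtain ⟨z, hyz, hz⟩ := exists_adj_dist_lt hH hyx
    exact Set.mem_insert_of_mem x
      (Set.mem_biUnion (x := z) (Nat.le_of_lt_succ (hz.trans_le hy)) hyz.symm)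

lemma dist_apply_le (hH : H.Connected) (f : H →g H) (x y : X) :
    H.dist (f x) (f y) ≤ H.dist x y := by
  obtain ⟨w, hw⟩ := hH.exists_walk_length_eq_dist x y
  rw [← hw, ← SimpleGraph.Walk.length_map f w]
  exact H.dist_le _

lemma dist_apply_of_mem_autGroup (hH : H.Connected) {g : Equiv.Perm X} (hg : g ∈ autGroup H)
    (x y : X) : H.dist (g x) (g y) = H.dist x y := by
  have hle {k : Equiv.Perm X} (hk : k ∈ autGroup H) (x y : X) : H.dist (k x) (k y) ≤ H.dist x y :=
    dist_apply_le hH ⟨k, fun h => (hk _ _).2 h⟩ x y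
  refine (hle hg x y).antisymm ?_
  simpa using hle (inv_mem hg) (g x) (g y)

variable {G : Subgroup (Equiv.Perm X)}

lemma HasOnlyTrivialCongruences.connected (hG : HasOnlyTrivialCongruences G)
    (hGH : G ≤ autGroup H) (hH : H ≠ ⊥) : H.Connected := by
  obtain ⟨a, b, hab⟩ := SimpleGraph.ne_bot_iff_exists_adj.1 hH
  have : Nonempty X := ⟨a⟩
  have hinv : ∀ g ∈ G, ∀ x y, H.Reachable x y → H.Reachable (g x) (g y) := fun g hg x y h =>
    h.map ⟨g, fun h => (hGH hg _ _).2 h⟩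
  exact ⟨(hG H.reachableSetoid hinv).resolve_left fun h => hab.ne (h a b hab.reachable)⟩

lemma exists_rowDiff_dist_infinite [Infinite X] (hH : H.Connected)
    (hfin : ∀ x, (H.neighborSet x).Finite) : ∃ x y, (rowDiff H.dist x y).Infinite := by
  by_contra! h
  obtain ⟨a⟩ := hH.nonempty
  obtain ⟨q, hq⟩ := (((hfin a).biUnion fun z _ => h a z).insert a).exists_notMem
  rw [Set.mem_insert_iff, not_or] at hq
  obtain ⟨z, haz, hz⟩ := exists_adj_dist_lt hH (Ne.symm hq.1)
  exact hq.2 (Set.mem_biUnion haz hz.ne')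

theorem HasOnlyTrivialCongruences.isLocallyRigid_of_locallyFinite [Infinite X]
    (hG : HasOnlyTrivialCongruences G) (hGH : G ≤ autGroup H) (hH : H ≠ ⊥)
    (hfin : ∀ x, (H.neighborSet x).Finite) : IsLocallyRigid G := by
  have hconn := hG.connected hGH hH
  have hdist : ∀ g ∈ G, ∀ x y, H.dist (g x) (g y) = H.dist x y := fun g hg =>
    dist_apply_of_mem_autGroup hconn (hGH hg)
  refine isLocallyRigid_of_finite_balls hdist (finite_setOf_dist_le hconn hfin)
    ((hG.rowDiff_infinite_or_finite hdist).resolve_right fun h => ?_)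
  obtain ⟨x, y, hxy⟩ := exists_rowDiff_dist_infinite hconn hfin
  exact hxy (h x y)

end LocallyFinite

section FiniteRowDiff

variable {X : Type*} {Γ : SimpleGraph X}

lemma rowDiff_compl_finite {x y : X} (h : (rowDiff Γ.Adj x y).Finite) :
    (rowDiff Γᶜ.Adj x y).Finite := by
  refine (h.union (Set.toFinite {x, y})).subset fun z hz => ?_
  by_contra hzxy
  simp only [Set.mem_union, Set.mem_insert_iff, Set.mem_singleton_iff, not_or, mem_rowDiff_adj,
    not_not] at hzxy
  simp [mem_rowDiff_adj, Ne.symm hzxy.2.1, Ne.symm hzxy.2.2, hzxy.1] at hz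

lemma neighborSet_finite_of_rowDiff_finite {x y : X} (h : (rowDiff Γ.Adj x y).Finite)
    (hx : (Γ.neighborSet x).Finite) : (Γ.neighborSet y).Finite := by
  refine (hx.union h).subset fun z hz => or_iff_not_imp_right.2 fun hzd => ?_
  rw [mem_rowDiff_adj, not_not] at hzd
  exact hzd.2 hz

lemma finite_setOf_ncard_rowDiff_le (hfin : ∀ x y, (rowDiff Γ.Adj x y).Finite) {x : X}
    (hx : (Γ.neighborSet x).Infinite) (hxc : (Γᶜ.neighborSet x).Infinite) (n : ℕ) :
    {y | (rowDiff Γ.Adj x y).ncard ≤ n}.Finite := by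
  obtain ⟨S, hS, hScard⟩ := hx.exists_subset_card_eq (n + 1)
  obtain ⟨T, hT, hTcard⟩ := hxc.exists_subset_card_eq (n + 1)
  refine (S.finite_toSet.biUnion fun s _ => T.finite_toSet.biUnion fun t _ => hfin s t).subset
    fun y hy => ?_
  have hagree {R : Finset X} (hR : #R = n + 1) : ∃ z ∈ R, z ∉ rowDiff Γ.Adj x y :=
    Set.exists_mem_notMem_of_ncard_lt_ncard
      (by rw [Set.ncard_coe_finset, hR]; exact Nat.lt_succ_of_le hy) (hfin x y)
  obtain ⟨s, hs, hsd⟩ := hagree hScard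
  obtain ⟨t, ht, htd⟩ := hagree hTcard
  have hxs : Γ.Adj x s := hS hs
  have hxt : ¬ Γ.Adj x t := ((Γ.compl_adj x t).1 (hT ht)).2
  rw [mem_rowDiff_adj, not_not] at hsd htd
  refine Set.mem_biUnion hs (Set.mem_biUnion ht ?_)
  rw [mem_rowDiff_adj, Γ.adj_comm s, Γ.adj_comm t, ← hsd, ← htd]
  exact fun h => hxt (h.1 hxs)

lemma exists_locallyFinite_of_rowDiff_finite (hfin : ∀ x y, (rowDiff Γ.Adj x y).Finite)
    (hbot : Γ ≠ ⊥) (htop : Γ ≠ ⊤) :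
    ∃ H : SimpleGraph X, autGroup Γ ≤ autGroup H ∧ H ≠ ⊥ ∧ ∀ x, (H.neighborSet x).Finite := by
  by_cases hN : ∃ a, (Γ.neighborSet a).Finite
  · obtain ⟨a, ha⟩ := hN
    exact ⟨Γ, le_rfl, hbot, fun x => neighborSet_finite_of_rowDiff_finite (hfin a x) ha⟩
  by_cases hNc : ∃ a, (Γᶜ.neighborSet a).Finite
  · obtain ⟨a, ha⟩ := hNc
    exact ⟨Γᶜ, autGroup_compl_le Γ, by simpa using htop, fun x =>
      neighborSet_finite_of_rowDiff_finite (rowDiff_compl_finite (hfin a x)) ha⟩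
  obtain ⟨a, b, hab⟩ := SimpleGraph.ne_bot_iff_exists_adj.1 hbot
  let δ (x y : X) : ℕ := (rowDiff Γ.Adj x y).ncard
  have hδ (x y : X) : δ x y = δ y x := by simp only [δ, rowDiff_comm]
  let H : SimpleGraph X := SimpleGraph.fromRel fun x y => δ x y ≤ δ a b
  refine ⟨H, fun g hg x y => ?_, SimpleGraph.ne_bot_iff_exists_adj.2 ⟨a, b, hab.ne, Or.inl le_rfl⟩,
    fun x => ?_⟩
  · have hrow := rowDiff_map (f := Γ.Adj) fun x y => propext (hg x y)
    simp only [H, SimpleGraph.fromRel_adj, δ, hrow, Set.ncard_image_of_injective _ g.injective,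
      g.injective.ne_iff]
  · refine (finite_setOf_ncard_rowDiff_le hfin (not_exists.1 hN x) (not_exists.1 hNc x)
      (δ a b)).subset fun y hy => ?_
    obtain h | h := ((SimpleGraph.fromRel_adj (fun x y => δ x y ≤ δ a b) x y).1 hy).2
    · exact h
    · exact (hδ x y).trans_le h

end FiniteRowDiff

section Homogeneity

variable {X : Type*}

lemma exists_invariant_graph [DecidableEq X] {G : Subgroup (Equiv.Perm X)}
    (hG : ¬ ∀ s t : Finset X, #s = 2 → #t = 2 → ∃ g ∈ G, s.image g = t) :
    ∃ Γ : SimpleGraph X, G ≤ autGroup Γ ∧ Γ ≠ ⊥ ∧ Γ ≠ ⊤ := by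
  push Not at hG
  obtain ⟨s, t, hs, ht, hst⟩ := hG
  obtain ⟨a, b, hab, rfl⟩ := card_eq_two.1 hs
  obtain ⟨c, d, hcd, rfl⟩ := card_eq_two.1 ht
  let orbital (x y : X) : Prop := ∃ g ∈ G, g a = x ∧ g b = y
  have horb {g : Equiv.Perm X} (hg : g ∈ G) (x y : X) : orbital (g x) (g y) ↔ orbital x y := by
    constructor
    · rintro ⟨h, hh, hx, hy⟩
      exact ⟨g⁻¹ * h, mul_mem (inv_mem hg) hh, by simp [hx], by simp [hy]⟩
    · rintro ⟨h, hh, rfl, rfl⟩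
      exact ⟨g * h, mul_mem hg hh, rfl, rfl⟩
  refine ⟨SimpleGraph.fromRel orbital, fun g hg x y => ?_, ?_, fun htop => ?_⟩
  · simp only [SimpleGraph.fromRel_adj, horb hg, g.injective.ne_iff]
  · exact SimpleGraph.ne_bot_iff_exists_adj.2 ⟨a, b, hab, Or.inl ⟨1, one_mem G, rfl, rfl⟩⟩
  · have hadj : (SimpleGraph.fromRel orbital).Adj c d := by simpa [htop] using hcd
    obtain ⟨-, ⟨g, hg, rfl, rfl⟩ | ⟨g, hg, rfl, rfl⟩⟩ := hadj
    · exact hst g hg (by simp [image_insert])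
    · exact hst g hg (by simp [image_insert, pair_comm])

lemma apply_mem_iff_of_image_eq [DecidableEq X] {V : Finset X} {g : Equiv.Perm X}
    (h : V.image g = V) (x : X) : g x ∈ V ↔ x ∈ V := by
  conv_lhs => rw [← h, g.injective.mem_finset_image]

theorem HasOnlyTrivialCongruences.isLocallyRigid_of_invariant_graph [Infinite X]
    {G : Subgroup (Equiv.Perm X)} (hG : HasOnlyTrivialCongruences G)
    (htrans : ∀ x y, ∃ g ∈ G, g x = y) {Γ : SimpleGraph X} (hGΓ : G ≤ autGroup Γ) (hbot : Γ ≠ ⊥)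
    (htop : Γ ≠ ⊤) : IsLocallyRigid G := by
  obtain hinf | hfin := hG.rowDiff_infinite_or_finite (f := Γ.Adj) fun g hg x y =>
    propext (hGΓ hg x y)
  · refine (isLocallyRigid_autGroup_of_rowDiff_infinite (fun x y => ?_) hinf).mono hGΓ
    exact (htrans x y).imp fun g hg => hg.imp_left (hGΓ ·)
  · obtain ⟨H, hΓH, hH, hHfin⟩ := exists_locallyFinite_of_rowDiff_finite hfin hbot htop
    exact hG.isLocallyRigid_of_locallyFinite (hGΓ.trans hΓH) hH hHfin

end Homogeneity

/-- a primitive but not 2-homogeneous permutation group on an infinite set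
    acts locally rigidly. -/
theorem stmt12 {X : Type*} [Infinite X] [DecidableEq X] (G : Subgroup (Equiv.Perm X))
    (htrans : ∀ x y : X, ∃ g ∈ G, g x = y)
    (hprim : ∀ r : Setoid X, (∀ g ∈ G, ∀ x y : X, r.r x y → r.r (g x) (g y)) →
      (∀ x y : X, r.r x y → x = y) ∨ (∀ x y : X, r.r x y))
    (hnot2hom : ¬ ∀ s t : Finset X, s.card = 2 → t.card = 2 → ∃ g ∈ G, s.image g = t) :
    ∀ U : Finset X, ∃ V : Finset X, U ⊆ V ∧
      ∀ g ∈ G, V.image g = V → ∀ x ∈ U, g x = x := by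
  intro U
  obtain ⟨Γ, hGΓ, hbot, htop⟩ := exists_invariant_graph hnot2hom
  have hG : HasOnlyTrivialCongruences G := hprim
  obtain ⟨V, hUV, hV⟩ := hG.isLocallyRigid_of_invariant_graph htrans hGΓ hbot htop U
  exact ⟨V, hUV, fun g hg hgV => hV g hg (apply_mem_iff_of_image_eq hgV)⟩
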